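/- Let λ > 0, t > 0, δ ≥ 0 and F ∈ [0,1] be real numbers with λ·(2−2F) + 6δ > 0, and define f(t₁, t₂) = λ·( 2λ·t₁/(3(λ(2F+1)+6δ)) + 2λ·t₂/(3(λ(2−2F)+6δ)) − ( λ(2F+1)·t₁/(3(λ(2F+1)+6δ)) − λ(2−2F)·t₂/(3(λ(2−2F)+6δ)) )² / ( λ(2F+1)²·t₁/(6(λ(2F+1)+6δ)) + λ(2−2F)²·t₂/(6(λ(2−2F)+6δ)) ) ) for t₁, t₂ ≥ 0 with t₁ + t₂ = t and the denominator positive (set f = 2λ²t₂/(3(λ(2−2F)+6δ)) when the denominator vanishes, which only occurs if 2F+1 or 2−2F times the respective tᵢ vanishes appropriately). Then the maximum of f over {t₁, t₂ ≥ 0, t₁ + t₂ = t} equals 6λ²t / ( (2F+1)·√(λ(2−2F)+6δ) + (2−2F)·√(λ(2F+1)+6δ) )². -/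

import Mathlib

/-- The Fisher information `f(t₁,t₂)` for the fidelity `F` when times `t₁`, `t₂` are
allocated to coincidence and anti-coincidence counting, with total flux `λ` unknown and
dark count rate `δ`; when the denominator vanishes, `f` is set to
`2λ²t₂/(3(λ(2−2F)+6δ))`. -/
noncomputable def fisherInfoDark (lam δ F t₁ t₂ : ℝ) : ℝ :=
  if lam * (2 * F + 1) ^ 2 * t₁ / (6 * (lam * (2 * F + 1) + 6 * δ)) +
      lam * (2 - 2 * F) ^ 2 * t₂ / (6 * (lam * (2 - 2 * F) + 6 * δ)) = 0 then
    2 * lam ^ 2 * t₂ / (3 * (lam * (2 - 2 * F) + 6 * δ))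
  else
    lam * (2 * lam * t₁ / (3 * (lam * (2 * F + 1) + 6 * δ)) +
      2 * lam * t₂ / (3 * (lam * (2 - 2 * F) + 6 * δ)) -
      (lam * (2 * F + 1) * t₁ / (3 * (lam * (2 * F + 1) + 6 * δ)) -
          lam * (2 - 2 * F) * t₂ / (3 * (lam * (2 - 2 * F) + 6 * δ))) ^ 2 /
        (lam * (2 * F + 1) ^ 2 * t₁ / (6 * (lam * (2 * F + 1) + 6 * δ)) +
          lam * (2 - 2 * F) ^ 2 * t₂ / (6 * (lam * (2 - 2 * F) + 6 * δ))))

/-!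
A channel of rate `r` observed for a time `t` contributes `(t / r) ∇r ∇rᵀ` to the Fisher information
matrix of `(F, λ)`. Profiling out the unknown flux is taking a Schur complement, which for two
channels collapses by Lagrange's identity to a multiple of `t₁t₂ / (u²t₁ + v²t₂)`, where
`u = (2F+1)√(λ(2−2F)+6δ)` and `v = (2−2F)√(λ(2F+1)+6δ)`. The identity
`(u²t₁ + v²t₂)(t₁ + t₂) = (u + v)²t₁t₂ + (ut₁ − vt₂)²` then bounds this by
`(t₁ + t₂) / (u + v)²`, with equality when `ut₁ = vt₂`.
-/

section TwoChannels

theorem schur_complement_weighted_two {K : Type*} [Field K] {w₁ w₂ y₁ y₂ : K} (x₁ x₂ : K)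
    (h : w₁ * y₁ ^ 2 + w₂ * y₂ ^ 2 ≠ 0) :
    w₁ * x₁ ^ 2 + w₂ * x₂ ^ 2 -
        (w₁ * x₁ * y₁ + w₂ * x₂ * y₂) ^ 2 / (w₁ * y₁ ^ 2 + w₂ * y₂ ^ 2) =
      w₁ * w₂ * (x₁ * y₂ - x₂ * y₁) ^ 2 / (w₁ * y₁ ^ 2 + w₂ * y₂ ^ 2) := by
  rw [sub_div' h]
  congr 1
  ring

variable {K : Type*} [Field K] [LinearOrder K]

/-- The information `t₁t₂ / (u²t₁ + v²t₂)`, up to a constant factor, that two counting channels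
observed for times `t₁` and `t₂` carry about a parameter once a nuisance parameter is profiled out.
Where the denominator vanishes the value is `t₂ / u²`, the continuous extension in the case
`v = 0`. -/
def twoChannelInfo (u v t₁ t₂ : K) : K :=
  if u ^ 2 * t₁ + v ^ 2 * t₂ = 0 then t₂ / u ^ 2 else t₁ * t₂ / (u ^ 2 * t₁ + v ^ 2 * t₂)

theorem twoChannelInfo_balanced {u v : K} (hu : u ≠ 0) (huv : u + v ≠ 0) (t : K) :
    twoChannelInfo u v (v / (u + v) * t) (u / (u + v) * t) = t / (u + v) ^ 2 := by
  have hden : u ^ 2 * (v / (u + v) * t) + v ^ 2 * (u / (u + v) * t) = u * v * t := by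
    field_simp
  rw [twoChannelInfo, hden]
  split_ifs with h
  · obtain (rfl | rfl) : v = 0 ∨ t = 0 := by simpa [hu] using h
    · simp [hu]
    · simp
  · have hv : v ≠ 0 := right_ne_zero_of_mul (left_ne_zero_of_mul h)
    field_simp

theorem twoChannelInfo_le [IsStrictOrderedRing K] {u v t₁ t₂ : K} (huv : u + v ≠ 0)
    (h₁ : 0 ≤ t₁) (h₂ : 0 ≤ t₂) :
    twoChannelInfo u v t₁ t₂ ≤ (t₁ + t₂) / (u + v) ^ 2 := by
  have hu : 0 ≤ u ^ 2 * t₁ := by positivity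
  have hv : 0 ≤ v ^ 2 * t₂ := by positivity
  rw [twoChannelInfo]
  split_ifs with h
  · obtain (rfl | rfl) : v = 0 ∨ t₂ = 0 := by
      simpa using ((add_eq_zero_iff_of_nonneg hu hv).1 h).2
    · rw [add_zero]
      gcongr
      exact le_add_of_nonneg_left h₁
    · rw [zero_div]
      positivity
  · have hden : 0 < u ^ 2 * t₁ + v ^ 2 * t₂ := (add_nonneg hu hv).lt_of_ne' h
    rw [div_le_div_iff₀ hden (by positivity)]
    linear_combination sq_nonneg (u * t₁ - v * t₂)

end TwoChannels

section DarkCounts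

variable {lam δ F t₁ t₂ p q : ℝ}

theorem fisherInfoDark_denom_eq (hp : p ≠ 0) (hq : q ≠ 0)
    (hA : lam * (2 * F + 1) + 6 * δ = p ^ 2) (hB : lam * (2 - 2 * F) + 6 * δ = q ^ 2) :
    lam * (2 * F + 1) ^ 2 * t₁ / (6 * (lam * (2 * F + 1) + 6 * δ)) +
        lam * (2 - 2 * F) ^ 2 * t₂ / (6 * (lam * (2 - 2 * F) + 6 * δ)) =
      lam * ((((2 * F + 1) * q) ^ 2 * t₁ + ((2 - 2 * F) * p) ^ 2 * t₂) /
        (6 * p ^ 2 * q ^ 2)) := by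
  rw [hA, hB]
  field_simp

theorem fisherInfoDark_of_denom_eq_zero (hp : p ≠ 0) (hq : q ≠ 0)
    (hA : lam * (2 * F + 1) + 6 * δ = p ^ 2) (hB : lam * (2 - 2 * F) + 6 * δ = q ^ 2)
    (h : ((2 * F + 1) * q) ^ 2 * t₁ + ((2 - 2 * F) * p) ^ 2 * t₂ = 0) :
    fisherInfoDark lam δ F t₁ t₂ = 2 * lam ^ 2 * t₂ / (3 * q ^ 2) := by
  rw [fisherInfoDark, fisherInfoDark_denom_eq hp hq hA hB, h, zero_div, mul_zero, if_pos rfl, hB]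

theorem fisherInfoDark_of_denom_ne_zero (hlam : lam ≠ 0) (hp : p ≠ 0) (hq : q ≠ 0)
    (hA : lam * (2 * F + 1) + 6 * δ = p ^ 2) (hB : lam * (2 - 2 * F) + 6 * δ = q ^ 2)
    (h : ((2 * F + 1) * q) ^ 2 * t₁ + ((2 - 2 * F) * p) ^ 2 * t₂ ≠ 0) :
    fisherInfoDark lam δ F t₁ t₂ =
      6 * lam ^ 2 *
        (t₁ * t₂ / (((2 * F + 1) * q) ^ 2 * t₁ + ((2 - 2 * F) * p) ^ 2 * t₂)) := by
  -- The channel rates are `p² / 6` and `q² / 6`; their gradients in `(F, λ)` are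
  -- `(λ / 3, (2F + 1) / 6)` and `(-λ / 3, (2 - 2F) / 6)`.
  have hnuisance : 6 * t₁ / p ^ 2 * ((2 * F + 1) / 6) ^ 2 +
        6 * t₂ / q ^ 2 * ((2 - 2 * F) / 6) ^ 2 =
      (((2 * F + 1) * q) ^ 2 * t₁ + ((2 - 2 * F) * p) ^ 2 * t₂) / (6 * p ^ 2 * q ^ 2) := by
    field_simp
  have hnuisance_ne : (((2 * F + 1) * q) ^ 2 * t₁ + ((2 - 2 * F) * p) ^ 2 * t₂) /
      (6 * p ^ 2 * q ^ 2) ≠ 0 := by positivity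
  have hschur := schur_complement_weighted_two (lam / 3) (-lam / 3) (hnuisance ▸ hnuisance_ne)
  rw [hnuisance] at hschur
  rw [fisherInfoDark, fisherInfoDark_denom_eq hp hq hA hB,
    if_neg (mul_ne_zero hlam hnuisance_ne), hA, hB]
  calc
    _ = 6 * t₁ / p ^ 2 * (lam / 3) ^ 2 + 6 * t₂ / q ^ 2 * (-lam / 3) ^ 2 -
        (6 * t₁ / p ^ 2 * (lam / 3) * ((2 * F + 1) / 6) +
            6 * t₂ / q ^ 2 * (-lam / 3) * ((2 - 2 * F) / 6)) ^ 2 /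
          ((((2 * F + 1) * q) ^ 2 * t₁ + ((2 - 2 * F) * p) ^ 2 * t₂) / (6 * p ^ 2 * q ^ 2)) := by
      rw [mul_sub, ← mul_div_assoc lam, mul_div_mul_left _ _ hlam]
      ring
    _ = _ := hschur
    _ = _ := by
      field_simp
      ring

theorem fisherInfoDark_eq_twoChannelInfo (hp : p ≠ 0) (hq : q ≠ 0)
    (hA : lam * (2 * F + 1) + 6 * δ = p ^ 2) (hB : lam * (2 - 2 * F) + 6 * δ = q ^ 2)
    (h₁ : 0 ≤ t₁) (h₂ : 0 ≤ t₂) :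
    fisherInfoDark lam δ F t₁ t₂ =
      6 * lam ^ 2 * twoChannelInfo ((2 * F + 1) * q) ((2 - 2 * F) * p) t₁ t₂ := by
  obtain rfl | hlam := eq_or_ne lam 0
  · simp [fisherInfoDark]
  rw [twoChannelInfo]
  split_ifs with h
  · rw [fisherInfoDark_of_denom_eq_zero hp hq hA hB h]
    obtain hF | rfl : 2 - 2 * F = 0 ∨ t₂ = 0 := by
      simpa [hp] using ((add_eq_zero_iff_of_nonneg (by positivity) (by positivity)).1 h).2
    · obtain rfl : F = 1 := by linear_combination -hF / 2
      field_simp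
      ring
    · simp
  · exact fisherInfoDark_of_denom_ne_zero hlam hp hq hA hB h

end DarkCounts

theorem stmt19_general {lam t δ F : ℝ} (ht : 0 ≤ t) (hF : F ∈ Set.Ioc (-1 / 2 : ℝ) 1)
    (hA : 0 < lam * (2 * F + 1) + 6 * δ) (hB : 0 < lam * (2 - 2 * F) + 6 * δ) :
    IsGreatest {y : ℝ | ∃ t₁ t₂ : ℝ, 0 ≤ t₁ ∧ 0 ≤ t₂ ∧ t₁ + t₂ = t ∧
        y = fisherInfoDark lam δ F t₁ t₂}
      (6 * lam ^ 2 * t /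
        ((2 * F + 1) * Real.sqrt (lam * (2 - 2 * F) + 6 * δ) +
          (2 - 2 * F) * Real.sqrt (lam * (2 * F + 1) + 6 * δ)) ^ 2) := by
  obtain ⟨hF₀, hF₁⟩ := hF
  have hp := Real.sqrt_pos.2 hA
  have hq := Real.sqrt_pos.2 hB
  have hred {t₁ t₂ : ℝ} (h₁ : 0 ≤ t₁) (h₂ : 0 ≤ t₂) :=
    fisherInfoDark_eq_twoChannelInfo hp.ne' hq.ne' (Real.sq_sqrt hA.le).symm
      (Real.sq_sqrt hB.le).symm h₁ h₂
  set u := (2 * F + 1) * √(lam * (2 - 2 * F) + 6 * δ)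
  set v := (2 - 2 * F) * √(lam * (2 * F + 1) + 6 * δ)
  have hu : 0 < u := mul_pos (by linarith) hq
  have hv : 0 ≤ v := mul_nonneg (by linarith) hp.le
  have huv : 0 < u + v := by positivity
  rw [mul_div_assoc]
  constructor
  · have h₁ : 0 ≤ v / (u + v) * t := by positivity
    have h₂ : 0 ≤ u / (u + v) * t := by positivity
    exact ⟨_, _, h₁, h₂, by field_simp; ring,
      by rw [hred h₁ h₂, twoChannelInfo_balanced hu.ne' huv.ne']⟩
  · rintro _ ⟨t₁, t₂, h₁, h₂, rfl, rfl⟩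
    rw [hred h₁ h₂]
    gcongr
    exact twoChannelInfo_le huv.ne' h₁ h₂

/-- For `λ > 0`, `t > 0`, `δ ≥ 0` and `F ∈ [0,1]` with
`λ(2−2F) + 6δ > 0`, the maximum of the Fisher information `f` over the allocations
`t₁, t₂ ≥ 0` with `t₁ + t₂ = t` equals
`6λ²t/((2F+1)·√(λ(2−2F)+6δ) + (2−2F)·√(λ(2F+1)+6δ))²`. -/
theorem stmt19 (lam t δ F : ℝ) (hlam : 0 < lam) (ht : 0 < t) (hδ : 0 ≤ δ)
    (hF : F ∈ Set.Icc (0 : ℝ) 1) (hpos : 0 < lam * (2 - 2 * F) + 6 * δ) :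
    IsGreatest {y : ℝ | ∃ t₁ t₂ : ℝ, 0 ≤ t₁ ∧ 0 ≤ t₂ ∧ t₁ + t₂ = t ∧
        y = fisherInfoDark lam δ F t₁ t₂}
      (6 * lam ^ 2 * t /
        ((2 * F + 1) * Real.sqrt (lam * (2 - 2 * F) + 6 * δ) +
          (2 - 2 * F) * Real.sqrt (lam * (2 * F + 1) + 6 * δ)) ^ 2) := by
  have hA : 0 < lam * (2 * F + 1) + 6 * δ := by have := hF.1; positivity
  exact stmt19_general ht.le ⟨by linarith [hF.1], hF.2⟩ hA hpos
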